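/- arXiv:1104.5188 — 2 statements merged into one kernel-verified Lean document; each statement's English description precedes it below -/
import Mathlib

section
/- Let X be a metric space with a Busemann midpoint map m, and let B ⊆ X be a nonempty bounded set. Let C be the smallest subset of X containing B that is closed under midpoints (i.e., m(x,y) ∈ C whenever x, y ∈ C). Then diam(C) = diam(B). -/
open Filter MeasureTheory Metric Topology
open scoped Pointwise symmDiff ENNReal

/-- A Busemann midpoint map on a metric space. -/
structure BusemannMidpoint (X : Type*) [MetricSpace X] where
  mid : X → X → X
  dist_left : ∀ x y, dist x (mid x y) = dist x y / 2
  dist_right : ∀ x y, dist (mid x y) y = dist x y / 2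
  convex : ∀ x y x' y', dist (mid x y) (mid x' y') ≤ (dist x x' + dist y y') / 2

/-- A barycenter family on a metric space with a Busemann midpoint map. -/
structure BarycenterFamily (X : Type*) [MetricSpace X] (M : BusemannMidpoint X) where
  b : (n : ℕ) → (Fin n → X) → X
  b_one : ∀ x : Fin 1 → X, b 1 x = x 0
  b_two : ∀ x : Fin 2 → X, b 2 x = M.mid (x 0) (x 1)
  perm_invariant : ∀ (n : ℕ) (σ : Equiv.Perm (Fin n)) (x : Fin n → X), b n (x ∘ σ) = b n x
  lipschitz : ∀ (n : ℕ) (x y : Fin n → X),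
    dist (b n x) (b n y) ≤ (1 / n : ℝ) * ∑ i, dist (x i) (y i)
  recur : ∀ (n : ℕ), 1 ≤ n → ∀ x : Fin (n + 1) → X,
    b (n + 1) x = b (n + 1) (fun i => b n (x ∘ i.succAbove))

/-- The `k`-fold repetition of a tuple. -/
def repTuple {X : Type*} {n : ℕ} (Q : Fin n → X) (k : ℕ) : Fin (n * k) → X :=
  fun i => Q ⟨i.val % n, Nat.mod_lt _ (by
    rcases Nat.eq_zero_or_pos n with h | h
    · exact absurd i.isLt (by simp [h])
    · exact h)⟩

/-!
If every closed ball containing `B` also contains `C`, then `diam C ≤ diam B`: the ball of radius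
`diam B` about a point of `B` contains `B`, hence `C`; so the ball of the same radius about a point
of `C` contains `B` as well, hence `C`. In a space with a Busemann midpoint map closed balls are
closed under midpoints, so those containing `B` also contain its midpoint closure.
-/

theorem ediam_le_ediam_of_forall_closedEBall {X : Type*} [PseudoEMetricSpace X] {B C : Set X}
    (hballs : ∀ z r, B ⊆ closedEBall z r → C ⊆ closedEBall z r) :
    ediam C ≤ ediam B := by
  have hC_near_B : ∀ b ∈ B, C ⊆ closedEBall b (ediam B) := fun b hb =>
    hballs b _ fun _ hx => edist_le_ediam_of_mem hx hb
  have hC_near_C : ∀ c ∈ C, C ⊆ closedEBall c (ediam B) := fun c hc =>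
    hballs c _ fun b hb => mem_closedEBall_comm.mp (hC_near_B b hb hc)
  exact ediam_le fun x hx y hy => hC_near_C y hy hx

namespace BusemannMidpoint

variable {X : Type*} [MetricSpace X] (M : BusemannMidpoint X)

theorem mid_self (x : X) : M.mid x x = x :=
  (dist_eq_zero.mp (by rw [M.dist_left, dist_self, zero_div])).symm

theorem dist_mid_le (x y z : X) : dist (M.mid x y) z ≤ (dist x z + dist y z) / 2 := by
  simpa only [M.mid_self] using M.convex x y z z

theorem edist_mid_le_max (x y z : X) : edist (M.mid x y) z ≤ max (edist x z) (edist y z) := by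
  have hdist : dist (M.mid x y) z ≤ max (dist x z) (dist y z) := by
    linarith [M.dist_mid_le x y z, le_max_left (dist x z) (dist y z),
      le_max_right (dist x z) (dist y z)]
  simpa only [edist_dist, ENNReal.ofReal_max] using ENNReal.ofReal_le_ofReal hdist

end BusemannMidpoint

theorem diam_midpoint_closure_eq_general {X : Type*} [PseudoEMetricSpace X] {m : X → X → X}
    (hm : ∀ x y z, edist (m x y) z ≤ max (edist x z) (edist y z))
    {B C : Set X} (hBC : B ⊆ C)
    (hCmin : ∀ S : Set X, B ⊆ S → (∀ x ∈ S, ∀ y ∈ S, m x y ∈ S) → C ⊆ S) :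
    ediam C = ediam B := by
  have hballs_mid : ∀ z r, ∀ x ∈ closedEBall z r, ∀ y ∈ closedEBall z r, m x y ∈ closedEBall z r :=
    fun z _ x hx y hy => (hm x y z).trans (max_le hx hy)
  exact le_antisymm
    (ediam_le_ediam_of_forall_closedEBall fun z r hB => hCmin _ hB (hballs_mid z r))
    (ediam_mono hBC)

/-- the diameter of the midpoint-convex closure of a nonempty
bounded set equals the diameter of the set. -/
theorem diam_midpoint_closure_eq {X : Type*} [MetricSpace X] (M : BusemannMidpoint X)
    (B : Set X) (hBne : B.Nonempty) (hBbdd : Bornology.IsBounded B)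
    (C : Set X) (hBC : B ⊆ C)
    (hCmid : ∀ x ∈ C, ∀ y ∈ C, M.mid x y ∈ C)
    (hCmin : ∀ S : Set X, B ⊆ S → (∀ x ∈ S, ∀ y ∈ S, M.mid x y ∈ S) → C ⊆ S) :
    Metric.diam C = Metric.diam B := by
  rw [diam, diam, diam_midpoint_closure_eq_general M.edist_mid_le_max hBC hCmin]
end

section
/- Let k₀ ≥ 10 be an integer and define a sequence of positive integers by ℓ_1 := k₀² and ℓ_{j+1} := ℓ_j + ⌊√(ℓ_j)⌋. Then for all j ≥ 1, ℓ_j ≥ (k₀ + j)²/9. -/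
/-!
Put `s = ⌊√n⌋`. If `m² ≤ 9n`, then `n < (s + 1)²` gives `m ≤ 3s + 2`, so passing from `m²` to
`(m + 1)²` costs `2m + 1 ≤ 6s + 5`, whereas passing from `9n` to `9(n + s)` gains `9s`. The gain
covers the cost as soon as `s ≥ 2`; for `s = 1` the only case left is `m = 5`, `n = 3`, where
`36 ≤ 36`. Hence `m² ≤ 9n` persists when `m` grows by one and `n` by `⌊√n⌋`.
-/

theorem lt_mul_sqrt_add_one_of_sq_le {c m n : ℕ} (hc : 0 < c) (h : m ^ 2 ≤ c ^ 2 * n) :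
    m < c * (n.sqrt + 1) := by
  refine lt_of_pow_lt_pow_left₀ 2 (Nat.zero_le _) ?_
  calc
    m ^ 2 ≤ c ^ 2 * n := h
    _ < c ^ 2 * (n.sqrt + 1) ^ 2 := by gcongr; exact Nat.lt_succ_sqrt' n
    _ = (c * (n.sqrt + 1)) ^ 2 := (mul_pow ..).symm

theorem add_one_sq_le_nine_mul_add_sqrt {m n : ℕ} (hn : 0 < n) (h : m ^ 2 ≤ 9 * n) :
    (m + 1) ^ 2 ≤ 9 * (n + n.sqrt) := by
  have sqrt_pos : 0 < n.sqrt := Nat.sqrt_pos.2 hn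
  have m_lt : m < 3 * (n.sqrt + 1) := lt_mul_sqrt_add_one_of_sq_le three_pos h
  obtain gain | ⟨rfl, sqrt_eq⟩ : 2 * m + 1 ≤ 9 * n.sqrt ∨ m = 5 ∧ n.sqrt = 1 := by lia
  · calc
      (m + 1) ^ 2 = m ^ 2 + (2 * m + 1) := by ring
      _ ≤ 9 * n + 9 * n.sqrt := by gcongr
      _ = 9 * (n + n.sqrt) := by ring
  · lia

theorem add_sq_le_nine_mul_of_rec {ℓ : ℕ → ℕ} {a m : ℕ}
    (hrec : ∀ j, a ≤ j → ℓ (j + 1) = ℓ j + (ℓ j).sqrt) (hm : 0 < m) (ha : m ^ 2 ≤ 9 * ℓ a)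
    (i : ℕ) : (m + i) ^ 2 ≤ 9 * ℓ (a + i) := by
  induction i with
  | zero => exact ha
  | succ i ih =>
    have sq_pos : 0 < (m + i) ^ 2 := by positivity
    rw [← add_assoc, ← add_assoc, hrec (a + i) (Nat.le_add_right a i)]
    exact add_one_sq_le_nine_mul_add_sqrt (by lia) ih

theorem ell_seq_growth_general (k₀ : ℕ) (hk₀ : 0 < k₀) (ℓ : ℕ → ℕ)
    (h1 : ℓ 1 = k₀ ^ 2)
    (hrec : ∀ j : ℕ, 1 ≤ j → ℓ (j + 1) = ℓ j + Nat.sqrt (ℓ j)) :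
    ∀ j : ℕ, 1 ≤ j → ((k₀ + j : ℕ) : ℝ) ^ 2 / 9 ≤ (ℓ j : ℝ) := by
  intro j hj
  obtain ⟨i, rfl⟩ := Nat.exists_eq_add_of_le hj
  have base : (k₀ + 1) ^ 2 ≤ 9 * ℓ 1 := by
    calc
      (k₀ + 1) ^ 2 ≤ (3 * k₀) ^ 2 := by gcongr; lia
      _ = 9 * ℓ 1 := by rw [h1]; ring
  have bound : (k₀ + (1 + i)) ^ 2 ≤ 9 * ℓ (1 + i) := by
    rw [← add_assoc]
    exact add_sq_le_nine_mul_of_rec hrec k₀.succ_pos base i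
  rw [div_le_iff₀' (by norm_num)]
  exact_mod_cast bound

/-- growth of the sequence ℓ_{j+1} = ℓ_j + ⌊√ℓ_j⌋ starting from k₀². -/
theorem ell_seq_growth (k₀ : ℕ) (hk₀ : 10 ≤ k₀) (ℓ : ℕ → ℕ)
    (h1 : ℓ 1 = k₀ ^ 2)
    (hrec : ∀ j : ℕ, 1 ≤ j → ℓ (j + 1) = ℓ j + Nat.sqrt (ℓ j)) :
    ∀ j : ℕ, 1 ≤ j → ((k₀ + j : ℕ) : ℝ) ^ 2 / 9 ≤ (ℓ j : ℝ) :=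
  ell_seq_growth_general k₀ (by lia) ℓ h1 hrec
end
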